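/- arXiv:2406.07838 — 2 statements merged into one kernel-verified Lean document; each statement's English description precedes it below -/
import Mathlib

section
/- Let n ≥ 1 and N = (N_0, …, N_n) ∈ ℤ^{n+1} with N_0 + ⋯ + N_n = 0. Write s_k = ∑_{j=0}^{k} N_j and c_k = N_{n−k}/(k+1) + s_{n−k}/(k(k+1)) for 1 ≤ k ≤ n. If s_k ≥ max{0, −(n−k)·N_k} and N_k ≥ 1/(n−k) − (n−k+1) for all 0 ≤ k ≤ n−1, then K_n(N) ≥ (1/(n² · e^n · (n!)²)) · ∏_{k=1}^{n} ((c_k+1)^{c_k+1}/c_k^{c_k})^{k−1}, with the convention 0^0 = 1. -/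
open Finset

/-- The entropy-like function `h(t) = (t+1)·log(t+1) − t·log t` (with `h 0 = 0`
since `Real.log 0 = 0`). -/
noncomputable def entH (t : ℝ) : ℝ := (t + 1) * Real.log (t + 1) - t * Real.log t

/-- `f` is an integer flow on the complete graph `k_{n+1}` with netflow `N`:
`f i j` is the flow on the edge `(i,j)` for `i < j`, it vanishes for `i ≥ j`,
and the netflow at each vertex `i` is `N i`. -/
def IsIntFlow (n : ℕ) (N : Fin (n + 1) → ℤ) (f : Fin (n + 1) → Fin (n + 1) → ℕ) : Prop :=
  (∀ i j : Fin (n + 1), ¬ i < j → f i j = 0) ∧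
  ∀ i : Fin (n + 1),
    (∑ j : Fin (n + 1), if i < j then (f i j : ℤ) else 0) -
      (∑ k : Fin (n + 1), if k < i then (f k i : ℤ) else 0) = N i

/-- The Kostant partition function: the number of integer flows on the complete
graph `k_{n+1}` with netflow `N`. -/
noncomputable def Kn (n : ℕ) (N : Fin (n + 1) → ℤ) : ℕ :=
  Nat.card {f : Fin (n + 1) → Fin (n + 1) → ℕ // IsIntFlow n N f}

/-- The flow polytope of the complete graph `k_{n+1}` with netflow `N`. -/
def FlowPolytope (n : ℕ) (N : Fin (n + 1) → ℝ) : Set (Fin (n + 1) → Fin (n + 1) → ℝ) :=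
  {f | (∀ i j : Fin (n + 1), i < j → 0 ≤ f i j) ∧
    (∀ i j : Fin (n + 1), ¬ i < j → f i j = 0) ∧
    ∀ i : Fin (n + 1),
      (∑ j : Fin (n + 1), if i < j then f i j else 0) -
        (∑ k : Fin (n + 1), if k < i then f k i else 0) = N i}

/-- The flow entropy `H(f)`. -/
noncomputable def flowEntropy (n : ℕ) (N : Fin (n + 1) → ℝ)
    (f : Fin (n + 1) → Fin (n + 1) → ℝ) : ℝ :=
  (∑ i : Fin (n + 1), ∑ j : Fin (n + 1), if i < j then entH (f i j) else 0) +
  ∑ j : Fin (n + 1), if 0 < (j : ℕ) ∧ (j : ℕ) < n then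
    entH (∑ i : Fin (n + 1), if i < j then (N i - f i j) else 0) else 0

/-- Partial sums `s_k = N_0 + ⋯ + N_k`. -/
def sPartial (n : ℕ) (N : Fin (n + 1) → ℤ) (k : ℕ) : ℤ :=
  ∑ j : Fin (n + 1), if (j : ℕ) ≤ k then N j else 0

/-- Extend `(N_0,…,N_{n−1})` to the netflow vector `(N_0,…,N_{n−1},−∑ N_i)`. -/
def extend (n : ℕ) (N : Fin n → ℤ) : Fin (n + 1) → ℤ := Fin.snoc N (-∑ i, N i)

/-- `c_k = N_{n−k}/(k+1) + s_{n−k}/(k(k+1))`. -/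
noncomputable def cAvg (n : ℕ) (N : Fin (n + 1) → ℤ) (k : ℕ) : ℝ :=
  (∑ m : Fin (n + 1), if (m : ℕ) = n - k then (N m : ℝ) else 0) / ((k : ℝ) + 1) +
  ((sPartial n N (n - k) : ℤ) : ℝ) / ((k : ℝ) * ((k : ℝ) + 1))

/-!
Peel off the vertices in order, keeping the vertices not yet treated merged into the sink, and
weight a flow on the merged graph by the number of ways to distribute each of its sink flows `g i`
over the `d + 2` merged vertices. To split off the next vertex `v`, with `d + 1` vertices after it,
choose for each `i` the part `f i ≤ g i` of the sink flow that passes through `v`; then `v` emits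
`N v + ∑ f`, which has to be nonnegative and can be distributed over the `d + 1` vertices after `v`
in `(N v + ∑ f + d).choose d` ways. As `∑ g = s_{v-1}` is the same for all flows, the weighted mean
of `N v + ∑ f` is always `(d + 1) c` with `c = c_{d+1}`. Binomials with `d ≥ 1` being convex,
Jensen's inequality bounds the gain below by the generalized binomial `((d + 1) c + d).choose d`,
and an integral comparison together with Stirling's formula bounds this below by
`((c + 1)^{c + 1} / c^c)^d / (e √(d + 1))`. For `d = 0` only the sign condition matters, and the
reflection `f ↦ g - f` shows that at least half of the choices, hence more than `1 / e` of them,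
satisfy it.
-/

lemma rpow_div_rpow_eq_exp_entH {c : ℝ} (hc : 0 ≤ c) :
    (c + 1) ^ (c + 1) / c ^ c = Real.exp (entH c) := by
  rw [entH, Real.exp_sub, Real.rpow_def_of_pos (by linarith), mul_comm (Real.log _)]
  rcases hc.eq_or_lt with rfl | hc
  · simp
  · rw [Real.rpow_def_of_pos hc, mul_comm (Real.log c)]

lemma log_add_one_le_entH {c : ℝ} (hc : 0 < c) : Real.log (c + 1) ≤ entH c := by
  have hlog : Real.log c ≤ Real.log (c + 1) := Real.log_le_log hc (by linarith)
  unfold entH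
  nlinarith

lemma le_sum_log_add_succ {x : ℝ} (hx : 0 < x) (m : ℕ) :
    (x + m) * Real.log (x + m) - x * Real.log x - m ≤
      ∑ j ∈ range m, Real.log (x + (j + 1)) := by
  have hmono : MonotoneOn Real.log (Set.Icc x (x + m)) := fun a ha b _ hab =>
    Real.log_le_log (hx.trans_le ha.1) hab
  have h := hmono.integral_le_sum
  rw [integral_log] at h
  push_cast at h
  linarith

lemma log_factorial_succ_le (d : ℕ) :
    Real.log (d + 1).factorial ≤
      (d + 1) * Real.log (d + 1) - (d + 1) + 1 + Real.log (d + 1) / 2 := by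
  have h := Stirling.log_stirlingSeq'_antitone (Nat.zero_le d)
  simp only [Function.comp_apply, Nat.succ_eq_add_one, Stirling.log_stirlingSeq_formula] at h
  push_cast at h
  rw [Real.log_mul two_ne_zero (by positivity), Real.log_div (by positivity) (by positivity),
    Real.log_exp, one_div (Real.exp 1), Real.log_inv, Real.log_exp, mul_one, Nat.factorial_one,
    Nat.cast_one, Real.log_one] at h
  linarith

lemma descPochhammer_eval_add_eq_prod {R : Type*} [CommRing R] (d : ℕ) (x : R) :
    (descPochhammer R d).eval (x + d) = ∏ j ∈ range d, (x + (j + 1)) := by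
  rw [descPochhammer_eval_eq_prod_range, ← prod_range_reflect]
  refine prod_congr rfl fun j hj => ?_
  have hj : j + 1 ≤ d := mem_range.mp hj
  rw [Nat.sub_sub, Nat.cast_sub (by omega)]
  push_cast
  ring

/-- The factor `((c+1)^{c+1}/c^c)^{k-1} / (e √k)` that the vertex with `k` vertices after it
contributes to the lower bound for the Kostant partition function, where `c = c_k`. -/
noncomputable def vertexFactor (k : ℕ) (c : ℝ) : ℝ :=
  ((c + 1) ^ (c + 1) / c ^ c) ^ (k - 1) / (Real.exp 1 * √k)

lemma vertexFactor_nonneg {c : ℝ} (hc : 0 ≤ c) (k : ℕ) : 0 ≤ vertexFactor k c := by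
  unfold vertexFactor
  positivity

lemma log_vertexFactor_succ {c : ℝ} (hc : 0 ≤ c) (d : ℕ) :
    Real.log (vertexFactor (d + 1) c) = d * entH c - 1 - Real.log (d + 1) / 2 := by
  rw [vertexFactor, rpow_div_rpow_eq_exp_entH hc, Nat.add_sub_cancel,
    Real.log_div (by positivity) (by positivity), Real.log_mul (by positivity) (by positivity),
    Real.log_pow, Real.log_exp, Real.log_exp, Real.log_sqrt (by positivity)]
  push_cast
  ring

lemma le_sum_log_sub_log_factorial {c : ℝ} (hc : 0 < c) (d : ℕ) :
    d * entH c - 1 - Real.log (d + 1) / 2 ≤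
      ∑ j ∈ range d, Real.log ((d + 1) * c + (j + 1)) - Real.log d.factorial := by
  have hfact : Real.log (d + 1).factorial = Real.log (d + 1) + Real.log d.factorial := by
    rw [Nat.factorial_succ]
    push_cast
    exact Real.log_mul (by positivity) (by positivity)
  have hlast : (d + 1) * c + (d + 1) = (d + 1) * (c + 1) := by ring
  have hsum := le_sum_log_add_succ (x := (d + 1) * c) (by positivity) (d + 1)
  rw [sum_range_succ] at hsum
  push_cast at hsum
  rw [hlast, Real.log_mul (by positivity) (by positivity),
    Real.log_mul (by positivity) hc.ne'] at hsum
  have hentropy : (d + 1) * (c + 1) * (Real.log (d + 1) + Real.log (c + 1)) -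
      (d + 1) * c * (Real.log (d + 1) + Real.log c) =
      (d + 1) * entH c + (d + 1) * Real.log (d + 1) := by
    unfold entH
    ring
  linarith [log_factorial_succ_le d, log_add_one_le_entH hc]

lemma vertexFactor_succ_le_descPochhammer {c : ℝ} (hc : 0 ≤ c) (d : ℕ) :
    vertexFactor (d + 1) c ≤
      (descPochhammer ℝ d).eval ((d + 1) * c + d) / d.factorial := by
  rcases hc.eq_or_lt with rfl | hc
  · have hden : 1 ≤ Real.exp 1 * √(d + 1 : ℕ) :=
      one_le_mul_of_one_le_of_one_le (Real.one_le_exp zero_le_one)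
        (Real.one_le_sqrt.mpr (by simp))
    simpa [vertexFactor, descPochhammer_eval_eq_descFactorial, Nat.descFactorial_self,
      Nat.factorial_ne_zero] using inv_le_one_of_one_le₀ hden
  have hfactor : 0 < vertexFactor (d + 1) c := by unfold vertexFactor; positivity
  have hprod : 0 < ∏ j ∈ range d, ((d + 1) * c + (j + 1)) := prod_pos fun j _ => by positivity
  rw [descPochhammer_eval_add_eq_prod, ← Real.log_le_log_iff hfactor (by positivity),
    Real.log_div hprod.ne' (by positivity), Real.log_prod fun j _ => by positivity,
    log_vertexFactor_succ hc.le]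
  exact le_sum_log_sub_log_factorial hc d

lemma descPochhammer_mul_sum_le_sum_choose {ι : Type*} {d : ℕ} (hd : d ≠ 0) {s : Finset ι}
    {w : ι → ℝ} (hw : ∀ i ∈ s, 0 ≤ w i) (y : ι → ℤ) {a : ℝ} (ha : -1 ≤ a)
    (hmean : a * ∑ i ∈ s, w i = ∑ i ∈ s, w i * y i) :
    (descPochhammer ℝ d).eval (a + d) / d.factorial * ∑ i ∈ s, w i ≤
      ∑ i ∈ s with 0 ≤ y i, w i * ((y i).toNat + d).choose d := by
  set W := ∑ i ∈ s, w i with hW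
  have hWnonneg : 0 ≤ W := sum_nonneg hw
  rcases hWnonneg.eq_or_lt' with hW0 | hWpos
  · rw [hW0, mul_zero]
    exact sum_nonneg fun i hi => mul_nonneg (hw i (mem_filter.mp hi).1) (Nat.cast_nonneg _)
  -- Truncation at zero only raises the mean, while the terms with `y i < 0` get `choose = 0`.
  let p : ι → ℕ := fun i => (y i + d).toNat
  have hle_mean : a + d ≤ ∑ i ∈ s, w i / W * p i := by
    have hle : ∀ i ∈ s, w i / W * (y i + d) ≤ w i / W * p i := fun i hi => by
      refine mul_le_mul_of_nonneg_left ?_ (div_nonneg (hw i hi) hWpos.le)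
      exact_mod_cast Int.self_le_toNat (y i + d)
    refine le_of_eq_of_le ?_ (sum_le_sum hle)
    simp_rw [div_mul_eq_mul_div, ← sum_div, mul_add, sum_add_distrib, ← sum_mul, ← hmean, ← hW]
    field_simp
  have hJensen := descPochhammer_eval_div_factorial_le_sum_choose hd p (fun i => w i / W)
    (fun i hi => div_nonneg (hw i hi) hWpos.le) (by rw [← sum_div, div_self hWpos.ne'])
    (by linarith)
  have hmono := monotoneOn_descPochhammer_eval (S := ℝ) d
    (Set.mem_Ici.mpr (by linarith)) (Set.mem_Ici.mpr (by linarith)) hle_mean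
  have hchoose : ∀ i, ((p i).choose d : ℝ) =
      if 0 ≤ y i then (((y i).toNat + d).choose d : ℝ) else 0 := fun i => by
    split_ifs with hy
    · rw [show p i = (y i).toNat + d by simp only [p]; omega]
    · rw [Nat.choose_eq_zero_of_lt (by simp only [p]; omega), Nat.cast_zero]
  calc (descPochhammer ℝ d).eval (a + d) / d.factorial * W
      ≤ (∑ i ∈ s, w i / W * (p i).choose d) * W := by
        gcongr
        exact (div_le_div_of_nonneg_right hmono (by positivity)).trans hJensen
    _ = ∑ i ∈ s with 0 ≤ y i, w i * ((y i).toNat + d).choose d := by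
        rw [sum_mul, sum_filter]
        refine sum_congr rfl fun i _ => ?_
        rw [hchoose]
        split_ifs
        · field_simp
        · simp only [mul_zero, zero_mul]

section Box

variable {ι : Type*} [Fintype ι]

/-- The number of ways to distribute, for each `i`, the amount `g i` over `d + 1` vertices: the
weight of a flow with sink flows `g` in the count in which the sink stands for `d + 1` vertices. -/
def numDistributions (d : ℕ) (g : ι → ℕ) : ℕ := ∏ i, (g i + d).choose d

variable [DecidableEq ι]

lemma sum_Iic_prod_eq_prod_sum {R : Type*} [CommSemiring R] (g : ι → ℕ) (w : ι → ℕ → R) :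
    ∑ f ∈ Iic g, ∏ i, w i (f i) = ∏ i, ∑ x ∈ Iic (g i), w i x :=
  (prod_univ_sum (fun i => Iic (g i)) w).symm

lemma sum_Iic_sum_mul_prod {R : Type*} [CommSemiring R] (g : ι → ℕ) (w : ι → ℕ → R)
    (c : R) (μ : ι → R)
    (hμ : ∀ i, c * ∑ x ∈ Iic (g i), x * w i x = μ i * ∑ x ∈ Iic (g i), w i x) :
    c * ∑ f ∈ Iic g, (∑ j, (f j : R)) * ∏ i, w i (f i) =
      (∑ j, μ j) * ∏ i, ∑ x ∈ Iic (g i), w i x := by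
  simp_rw [sum_mul]
  rw [sum_comm, mul_sum]
  refine sum_congr rfl fun j _ => ?_
  have hfactor : ∀ f : ι → ℕ, (f j : R) * ∏ i, w i (f i) =
      ∏ i, (if i = j then (f i : R) else 1) * w i (f i) := fun f => by
    rw [prod_mul_distrib, prod_ite_eq', if_pos (mem_univ j)]
  simp_rw [hfactor]
  rw [sum_Iic_prod_eq_prod_sum g fun i x => (if i = j then (x : R) else 1) * w i x,
    ← mul_prod_erase _ _ (mem_univ j), ← mul_prod_erase univ (fun i => ∑ x ∈ _, _) (mem_univ j),
    ← mul_assoc, ← mul_assoc]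
  congr 1
  · simpa using hμ j
  · refine prod_congr rfl fun i hi => ?_
    simp [ne_of_mem_erase hi]

lemma prod_add_one_le_two_mul_card_filter {g : ι → ℕ} {T : ℤ} (hT : 2 * T ≤ ∑ i, (g i : ℤ)) :
    ∏ i, (g i + 1) ≤ 2 * #{f ∈ Iic g | T ≤ ∑ i, (f i : ℤ)} := by
  have hreflect : #{f ∈ Iic g | ¬ T ≤ ∑ i, (f i : ℤ)} ≤ #{f ∈ Iic g | T ≤ ∑ i, (f i : ℤ)} := by
    refine card_le_card_of_injOn (fun f => g - f) (fun f hf => ?_) fun f hf f' hf' h => ?_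
    · simp only [coe_filter, mem_Iic, Set.mem_ofPred_eq] at hf ⊢
      have hsum : ∑ i, ((g - f) i : ℤ) = ∑ i, (g i : ℤ) - ∑ i, (f i : ℤ) := by
        rw [← sum_sub_distrib]
        exact sum_congr rfl fun i _ => Nat.cast_sub (hf.1 i)
      exact ⟨tsub_le_self, by omega⟩
    · simp only [coe_filter, mem_Iic, Set.mem_ofPred_eq] at hf hf'
      exact (tsub_right_inj hf.1 hf'.1).mp h
  have hcard : ∏ i, (g i + 1) = #(Iic g) := by simp [Pi.card_Iic]
  rw [hcard, ← card_filter_add_card_filter_not fun f : ι → ℕ => T ≤ ∑ i, (f i : ℤ)]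
  omega

lemma sum_Iic_choose_sub (d g : ℕ) :
    ∑ x ∈ Iic g, (g - x + d).choose d = (g + (d + 1)).choose (d + 1) := by
  rw [← Nat.range_succ_eq_Iic, sum_flip fun x => (x + d).choose d, Nat.sum_range_add_choose,
    add_assoc]

lemma sum_Iic_mul_choose_sub_eq_choose (d g : ℕ) :
    ∑ x ∈ Iic g, x * (g - x + d).choose d = (g + (d + 1)).choose (d + 2) := by
  induction g with
  | zero => simp
  | succ g ih =>
    have hmass := sum_Iic_choose_sub d g
    rw [← Nat.range_succ_eq_Iic] at hmass ih ⊢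
    rw [sum_range_succ']
    simp only [Nat.add_sub_add_right, add_mul, one_mul, zero_mul, add_zero, sum_add_distrib]
    rw [ih, hmass, add_right_comm, Nat.choose_succ_succ', add_comm]

lemma sum_Iic_mul_choose_sub (d g : ℕ) :
    (d + 2) * ∑ x ∈ Iic g, x * (g - x + d).choose d = g * (g + (d + 1)).choose (d + 1) := by
  have h := Nat.choose_succ_right_eq (g + (d + 1)) (d + 1)
  rw [Nat.add_sub_cancel] at h
  rw [sum_Iic_mul_choose_sub_eq_choose, mul_comm, h, mul_comm]

lemma sum_Iic_numDistributions_sub (d : ℕ) (g : ι → ℕ) :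
    ∑ f ∈ Iic g, numDistributions d (g - f) = numDistributions (d + 1) g := by
  simp only [numDistributions, Pi.sub_apply]
  rw [sum_Iic_prod_eq_prod_sum g fun i x => (g i - x + d).choose d]
  simp only [sum_Iic_choose_sub]

lemma sum_Iic_sum_mul_numDistributions_sub (d : ℕ) (g : ι → ℕ) :
    (d + 2) * ∑ f ∈ Iic g, (∑ j, f j) * numDistributions d (g - f) =
      (∑ j, g j) * numDistributions (d + 1) g := by
  have h := sum_Iic_sum_mul_prod g (fun i x => (g i - x + d).choose d) (d + 2) g fun i => by
    simpa only [sum_Iic_choose_sub, Nat.cast_id] using sum_Iic_mul_choose_sub d (g i)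
  simpa only [numDistributions, Pi.sub_apply, sum_Iic_choose_sub, Nat.cast_id] using h

lemma vertexFactor_one_mul_numDistributions_le (g : ι → ℕ) {N : ℤ}
    (hN : 0 ≤ 2 * N + ∑ j, (g j : ℤ)) (c : ℝ) :
    vertexFactor 1 c * numDistributions 1 g ≤ #{f ∈ Iic g | 0 ≤ N + ∑ j, (f j : ℤ)} := by
  have hhalf : vertexFactor 1 c ≤ 1 / 2 := by
    have := Real.add_one_le_exp (1 : ℝ)
    simp only [vertexFactor, Nat.sub_self, pow_zero, Nat.cast_one, Real.sqrt_one, mul_one]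
    exact one_div_le_one_div_of_le (by norm_num) (by linarith)
  have hcard : (numDistributions 1 g : ℝ) ≤ 2 * #{f ∈ Iic g | 0 ≤ N + ∑ j, (f j : ℤ)} := by
    have h := prod_add_one_le_two_mul_card_filter (g := g) (T := -N) (by linarith)
    simp only [neg_le_iff_add_nonneg'] at h
    simp only [numDistributions, Nat.choose_one_right]
    exact_mod_cast h
  calc vertexFactor 1 c * numDistributions 1 g
      ≤ 1 / 2 * (2 * #{f ∈ Iic g | 0 ≤ N + ∑ j, (f j : ℤ)}) := by gcongr
    _ = #{f ∈ Iic g | 0 ≤ N + ∑ j, (f j : ℤ)} := by ring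

lemma vertexFactor_succ_mul_numDistributions_le {d : ℕ} (hd : d ≠ 0) (g : ι → ℕ) {N : ℤ} {c : ℝ}
    (hc : 0 ≤ c) (hmean : (d + 1) * c = N + (∑ j, (g j : ℝ)) / (d + 2)) :
    vertexFactor (d + 1) c * numDistributions (d + 1) g ≤
      ∑ f ∈ Iic g with 0 ≤ N + ∑ j, (f j : ℤ),
        (numDistributions d (g - f) : ℝ) * ((N + ∑ j, (f j : ℤ)).toNat + d).choose d := by
  have hmass : ∑ f ∈ Iic g, (numDistributions d (g - f) : ℝ) = numDistributions (d + 1) g := by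
    exact_mod_cast sum_Iic_numDistributions_sub d g
  have hmoment : (d + 2) * ∑ f ∈ Iic g, (∑ j, (f j : ℝ)) * numDistributions d (g - f) =
      (∑ j, (g j : ℝ)) * numDistributions (d + 1) g := by
    exact_mod_cast sum_Iic_sum_mul_numDistributions_sub d g
  have hweighted : (d + 1) * c * ∑ f ∈ Iic g, (numDistributions d (g - f) : ℝ) =
      ∑ f ∈ Iic g, (numDistributions d (g - f) : ℝ) * (N + ∑ j, (f j : ℤ) : ℤ) := by
    push_cast
    simp only [mul_comm (numDistributions d (g - _) : ℝ), add_mul, sum_add_distrib, ← mul_sum,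
      hmass, hmean]
    field_simp
    linarith
  have hJensen := descPochhammer_mul_sum_le_sum_choose hd (fun _ _ => Nat.cast_nonneg _)
    (fun f : ι → ℕ => N + ∑ j, (f j : ℤ)) (neg_one_lt_zero.le.trans (by positivity)) hweighted
  rw [hmass] at hJensen
  exact (mul_le_mul_of_nonneg_right (vertexFactor_succ_le_descPochhammer hc d)
    (Nat.cast_nonneg _)).trans hJensen

lemma vertexFactor_mul_numDistributions_le (d : ℕ) (g : ι → ℕ) {N : ℤ} {c : ℝ} (hc : 0 ≤ c)
    (hmean : (d + 1) * c = N + (∑ j, (g j : ℝ)) / (d + 2)) :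
    vertexFactor (d + 1) c * numDistributions (d + 1) g ≤
      ∑ f ∈ Iic g with 0 ≤ N + ∑ j, (f j : ℤ),
        (numDistributions d (g - f) : ℝ) * ((N + ∑ j, (f j : ℤ)).toNat + d).choose d := by
  rcases eq_or_ne d 0 with rfl | hd
  · have hN : (0 : ℝ) ≤ 2 * N + ∑ j, (g j : ℝ) := by
      rw [Nat.cast_zero, zero_add, zero_add] at hmean
      linarith
    simpa [numDistributions] using
      vertexFactor_one_mul_numDistributions_le g (N := N) (by exact_mod_cast hN) c
  · exact vertexFactor_succ_mul_numDistributions_le hd g hc hmean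

end Box

section Flows

variable {n : ℕ} {N : Fin (n + 1) → ℤ} {F : Fin (n + 1) → Fin (n + 1) → ℕ}

lemma isIntFlow_iff :
    IsIntFlow n N F ↔ (∀ i j, ¬ i < j → F i j = 0) ∧
      ∀ i, ∑ j, (F i j : ℤ) - ∑ k, (F k i : ℤ) = N i := by
  refine and_congr_right fun hF => forall_congr' fun i => ?_
  have hcast : ∀ i j, (if i < j then (F i j : ℤ) else 0) = F i j := fun i j =>
    ite_eq_left_iff.mpr fun hij => by rw [hF i j hij, Nat.cast_zero]
  simp only [hcast]

lemma IsIntFlow.sum_sub_mul (hF : IsIntFlow n N F) (h : Fin (n + 1) → ℤ) :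
    ∑ i, ∑ j, (h i - h j) * F i j = ∑ i, h i * N i := by
  simp only [← (isIntFlow_iff.mp hF).2, sub_mul, mul_sub, sum_sub_distrib, mul_sum]
  rw [sum_comm (f := fun i j => h j * (F i j : ℤ))]

lemma IsIntFlow.le_neg_sum (hF : IsIntFlow n N F) (i j : Fin (n + 1)) :
    (F i j : ℤ) ≤ -∑ k : Fin (n + 1), (k : ℤ) * N k := by
  have hle : ∀ i j : Fin (n + 1), (F i j : ℤ) ≤ (-(i : ℤ) - -(j : ℤ)) * F i j := fun i j => by
    rcases lt_or_ge i j with hij | hij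
    · have : (i : ℤ) < j := by exact_mod_cast hij
      exact le_mul_of_one_le_left (Int.natCast_nonneg _) (by linarith)
    · simp [hF.1 i j hij.not_gt]
  have hnonneg : ∀ i j : Fin (n + 1), 0 ≤ (-(i : ℤ) - -(j : ℤ)) * F i j := fun i j =>
    (Int.natCast_nonneg _).trans (hle i j)
  calc (F i j : ℤ) ≤ (-(i : ℤ) - -(j : ℤ)) * F i j := hle i j
    _ ≤ ∑ l : Fin (n + 1), (-(i : ℤ) - -(l : ℤ)) * F i l :=
        single_le_sum (fun l _ => hnonneg i l) (mem_univ j)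
    _ ≤ ∑ k : Fin (n + 1), ∑ l : Fin (n + 1), (-(k : ℤ) - -(l : ℤ)) * F k l :=
        single_le_sum (fun k _ => sum_nonneg fun l _ => hnonneg k l) (mem_univ i)
    _ = -∑ k : Fin (n + 1), (k : ℤ) * N k := by
        rw [hF.sum_sub_mul fun k => -(k : ℤ)]
        simp only [neg_mul, sum_neg_distrib]

lemma finite_isIntFlow (n : ℕ) (N : Fin (n + 1) → ℤ) : {F | IsIntFlow n N F}.Finite :=
  (Set.finite_Iic fun _ _ => (-∑ k : Fin (n + 1), (k : ℤ) * N k).toNat).subset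
    fun _ hF i j => Int.ofNat_le.mp ((hF.le_neg_sum i j).trans (Int.self_le_toNat _))

/-- The sum `N_0 + ⋯ + N_{t-1}` of the first `t` netflows, which is `s_{t-1}` shifted so that
the empty sum is included. -/
def headSum (N : Fin (n + 1) → ℤ) (t : ℕ) : ℤ := ∑ j : Fin (n + 1), if (j : ℕ) < t then N j else 0

lemma sPartial_eq_headSum (N : Fin (n + 1) → ℤ) (k : ℕ) : sPartial n N k = headSum N (k + 1) := by
  simp only [sPartial, headSum, Nat.lt_succ_iff]

lemma headSum_succ (N : Fin (n + 1) → ℤ) (v : Fin (n + 1)) :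
    headSum N (v + 1) = headSum N v + N v := by
  have hsplit : ∀ j : Fin (n + 1), (if (j : ℕ) < v + 1 then N j else 0) =
      (if (j : ℕ) < v then N j else 0) + if j = v then N j else 0 := fun j => by
    rcases lt_trichotomy j v with h | rfl | h
    · simp [Nat.lt_succ_of_lt h, h, h.ne]
    · simp
    · simp [(Nat.succ_le_of_lt h).not_gt, h.not_gt, h.ne']
  simp only [headSum, hsplit, sum_add_distrib, sum_ite_eq', mem_univ, if_true]

/-- The netflow obtained from `N` by merging the vertices `t, …, n` into the sink `n`: the
vertices `t, …, n - 1` get netflow `0` and the sink balances the vertices before `t`. -/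
def mergedNetflow (N : Fin (n + 1) → ℤ) (t : ℕ) (i : Fin (n + 1)) : ℤ :=
  (if (i : ℕ) < t then N i else 0) - if i = Fin.last n then headSum N t else 0

lemma mergedNetflow_self (hsum : ∑ i, N i = 0) : mergedNetflow N n = N := by
  have hsink : headSum N n = -N (Fin.last n) := by
    rw [Fin.sum_univ_castSucc] at hsum
    simp only [headSum, Fin.sum_univ_castSucc, Fin.val_castSucc, Fin.is_lt, if_true, Fin.val_last,
      lt_irrefl, if_false]
    linarith
  funext i
  induction i using Fin.lastCases with
  | last => simp [mergedNetflow, hsink]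
  | cast i => simp [mergedNetflow]

lemma mergedNetflow_succ (N : Fin (n + 1) → ℤ) (v i : Fin (n + 1)) :
    mergedNetflow N (v + 1) i =
      mergedNetflow N v i + (if i = v then N v else 0) - if i = Fin.last n then N v else 0 := by
  have hlt : (i : ℕ) < v + 1 ↔ (i : ℕ) < v ∨ i = v := by
    rw [Nat.lt_succ_iff_lt_or_eq, Fin.ext_iff]
  rw [mergedNetflow, mergedNetflow, headSum_succ]
  rcases eq_or_ne i v with rfl | hiv
  · simp only [hlt, lt_irrefl, or_true, if_true, if_false]
    split_ifs <;> ring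
  · simp only [hlt, hiv, or_false, if_false]
    split_ifs <;> ring

/-- The integer flows on the graph in which the vertices `t, …, n` are merged into the sink `n`,
encoded as flows on the whole complete graph that avoid the vertices `t, …, n - 1`. -/
noncomputable def mergedFlows (N : Fin (n + 1) → ℤ) (t : ℕ) :
    Finset (Fin (n + 1) → Fin (n + 1) → ℕ) :=
  {F ∈ (finite_isIntFlow n (mergedNetflow N t)).toFinset |
    ∀ i : Fin (n + 1), t ≤ i → i ≠ Fin.last n → F i = 0}

lemma mem_mergedFlows {t : ℕ} :
    F ∈ mergedFlows N t ↔ IsIntFlow n (mergedNetflow N t) F ∧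
      ∀ i : Fin (n + 1), t ≤ i → i ≠ Fin.last n → F i = 0 := by
  simp [mergedFlows]

lemma row_eq_zero_of_mem_mergedFlows {t : ℕ} (hF : F ∈ mergedFlows N t) {i : Fin (n + 1)}
    (hi : t ≤ i) : F i = 0 := by
  rcases eq_or_ne i (Fin.last n) with rfl | hlast
  · exact funext fun j => (mem_mergedFlows.mp hF).1.1 _ _ (Fin.le_last j).not_gt
  · exact (mem_mergedFlows.mp hF).2 i hi hlast

lemma sum_col_of_mem_mergedFlows {t : ℕ} (hF : F ∈ mergedFlows N t) {i : Fin (n + 1)}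
    (hi : t ≤ i) : ∑ k, (F k i : ℤ) = -mergedNetflow N t i := by
  have hnet := (isIntFlow_iff.mp (mem_mergedFlows.mp hF).1).2 i
  simp only [row_eq_zero_of_mem_mergedFlows hF hi, Pi.zero_apply, Nat.cast_zero,
    sum_const_zero, zero_sub] at hnet
  linarith

lemma sum_sink_of_mem_mergedFlows {t : ℕ} (ht : t ≤ n) (hF : F ∈ mergedFlows N t) :
    ∑ k, (F k (Fin.last n) : ℤ) = headSum N t := by
  rw [sum_col_of_mem_mergedFlows hF ht, mergedNetflow]
  simp [ht.not_gt]

lemma col_eq_zero_of_mem_mergedFlows {t : ℕ} (hF : F ∈ mergedFlows N t) {i : Fin (n + 1)}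
    (hi : t ≤ i) (hlast : i ≠ Fin.last n) (k : Fin (n + 1)) : F k i = 0 := by
  have hsum := sum_col_of_mem_mergedFlows hF hi
  rw [mergedNetflow, if_neg hi.not_gt, if_neg hlast, sub_zero, neg_zero] at hsum
  exact_mod_cast (sum_eq_zero_iff_of_nonneg fun k _ => Int.natCast_nonneg (F k i)).mp hsum k
    (mem_univ k)

lemma zero_mem_mergedFlows_zero (N : Fin (n + 1) → ℤ) : 0 ∈ mergedFlows N 0 :=
  mem_mergedFlows.mpr ⟨isIntFlow_iff.mpr ⟨by simp, by simp [mergedNetflow, headSum]⟩, by simp⟩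

lemma card_mergedFlows_self (hsum : ∑ i, N i = 0) : #(mergedFlows N n) = Kn n N := by
  have hmem : ∀ F, F ∈ mergedFlows N n ↔ IsIntFlow n N F := fun F => by
    rw [mem_mergedFlows, mergedNetflow_self hsum]
    exact and_iff_left fun i hi hlast => absurd (Fin.val_lt_last hlast) hi.not_gt
  rw [Kn, ← Nat.card_eq_finsetCard]
  exact Nat.card_congr (Equiv.subtypeEquivRight hmem)

/-- The flow obtained from `F` by rerouting the part `f i` of the flow from `i` to the sink through
the vertex `v`, from which the amount `y` is sent to the sink. It is meant for `f i ≤ F i n`,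
where the subtraction does not truncate. -/
def splitFlow (v : Fin (n + 1)) (F : Fin (n + 1) → Fin (n + 1) → ℕ) (f : Fin (n + 1) → ℕ) (y : ℕ)
    (i j : Fin (n + 1)) : ℕ :=
  F i j - (if j = Fin.last n then f i else 0) + (if j = v then f i else 0) +
    if i = v ∧ j = Fin.last n then y else 0

section SplitFlow

variable {v : Fin (n + 1)} {f : Fin (n + 1) → ℕ} {y : ℕ}

lemma cast_splitFlow (hf : f ≤ fun i => F i (Fin.last n)) (i j : Fin (n + 1)) :
    (splitFlow v F f y i j : ℤ) = F i j - (if j = Fin.last n then (f i : ℤ) else 0) +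
      (if j = v then (f i : ℤ) else 0) +
      if i = v then (if j = Fin.last n then (y : ℤ) else 0) else 0 := by
  have hle : (if j = Fin.last n then f i else 0) ≤ F i j := by
    split_ifs with hj
    · exact hj ▸ hf i
    · exact Nat.zero_le _
  simp only [splitFlow, ite_and]
  push_cast [Nat.cast_sub hle]
  rfl

lemma isIntFlow_splitFlow (hv : v ≠ Fin.last n) (hF : F ∈ mergedFlows N v)
    (hf : f ≤ fun i => F i (Fin.last n)) (hy : (y : ℤ) = N v + ∑ i, (f i : ℤ)) :
    IsIntFlow n (mergedNetflow N (v + 1)) (splitFlow v F f y) := by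
  have hfzero : ∀ i, v ≤ i → f i = 0 := fun i hi => by
    simpa [row_eq_zero_of_mem_mergedFlows hF (Fin.le_def.mp hi)] using hf i
  obtain ⟨htri, hnet⟩ := isIntFlow_iff.mp (mem_mergedFlows.mp hF).1
  refine isIntFlow_iff.mpr ⟨fun i j hij => ?_, fun i => ?_⟩
  · have hsink : ¬ (i = v ∧ j = Fin.last n) := by
      rintro ⟨rfl, rfl⟩
      exact hij (Fin.lt_last_iff_ne_last.mpr hv)
    have hcol : (if j = v then f i else 0) = 0 := by
      split_ifs with hj
      · exact hfzero i (hj ▸ not_lt.mp hij)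
      · rfl
    rw [splitFlow, htri i j hij, hcol, if_neg hsink, Nat.zero_sub]
  · simp only [cast_splitFlow hf, sum_add_distrib, sum_sub_distrib, sum_ite_eq', sum_ite_irrel,
      sum_const_zero, mem_univ, if_true]
    rw [mergedNetflow_succ, ← hnet i, hy]
    split_ifs <;> ring

lemma splitFlow_mem_mergedFlows (hv : v ≠ Fin.last n) (hF : F ∈ mergedFlows N v)
    (hf : f ≤ fun i => F i (Fin.last n)) (hy : (y : ℤ) = N v + ∑ i, (f i : ℤ)) :
    splitFlow v F f y ∈ mergedFlows N (v + 1) := by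
  refine mem_mergedFlows.mpr ⟨isIntFlow_splitFlow hv hF hf hy, fun i hi _ => funext fun j => ?_⟩
  have hrow := row_eq_zero_of_mem_mergedFlows hF (Nat.le_of_succ_le hi)
  have hfi : f i = 0 := by simpa [hrow] using hf i
  have hiv : i ≠ v := by
    rintro rfl
    omega
  simp [splitFlow, hrow, hfi, hiv]

lemma eq_and_eq_of_splitFlow_eq (hv : v ≠ Fin.last n) {F' : Fin (n + 1) → Fin (n + 1) → ℕ}
    {f' : Fin (n + 1) → ℕ} {y' : ℕ} (hF : F ∈ mergedFlows N v) (hF' : F' ∈ mergedFlows N v)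
    (hf : f ≤ fun i => F i (Fin.last n)) (hf' : f' ≤ fun i => F' i (Fin.last n))
    (h : splitFlow v F f y = splitFlow v F' f' y') : F = F' ∧ f = f' := by
  have hcol : f = f' := funext fun i => by
    have := congrFun₂ h i v
    simpa [splitFlow, hv, col_eq_zero_of_mem_mergedFlows hF le_rfl hv,
      col_eq_zero_of_mem_mergedFlows hF' le_rfl hv] using this
  subst hcol
  refine ⟨funext₂ fun i j => ?_, rfl⟩
  rcases eq_or_ne i v with rfl | hi
  · rw [row_eq_zero_of_mem_mergedFlows hF le_rfl, row_eq_zero_of_mem_mergedFlows hF' le_rfl]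
  rcases eq_or_ne j v with rfl | hj
  · rw [col_eq_zero_of_mem_mergedFlows hF le_rfl hv, col_eq_zero_of_mem_mergedFlows hF' le_rfl hv]
  have hij := congrFun₂ h i j
  simp only [splitFlow, hi, hj, false_and, if_false, add_zero] at hij
  rcases eq_or_ne j (Fin.last n) with rfl | hlast
  · rw [if_pos rfl] at hij
    exact (tsub_left_inj (hf i) (hf' i)).mp hij
  · simpa only [if_neg hlast, Nat.sub_zero] using hij

lemma numDistributions_splitFlow (d : ℕ) (hv : v ≠ Fin.last n) (hF : F ∈ mergedFlows N v) :
    numDistributions d (fun i => splitFlow v F f y i (Fin.last n)) =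
      numDistributions d ((fun i => F i (Fin.last n)) - f) * (y + d).choose d := by
  have hfactor : ∀ i, (splitFlow v F f y i (Fin.last n) + d).choose d =
      (F i (Fin.last n) - f i + d).choose d * if i = v then (y + d).choose d else 1 := fun i => by
    rcases eq_or_ne i v with rfl | hi
    · simp [splitFlow, row_eq_zero_of_mem_mergedFlows hF le_rfl, hv.symm]
    · simp [splitFlow, hi, hv.symm]
  simp only [numDistributions, hfactor, prod_mul_distrib, prod_ite_eq', mem_univ, if_true,
    Pi.sub_apply]

end SplitFlow

/-- The number of integer flows on the complete graph obtained by merging all but the vertices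
before `t` into the sink, each flow being counted with the number of ways to distribute its
sink flows over `d + 1` vertices. -/
noncomputable def mergedCount (N : Fin (n + 1) → ℤ) (t d : ℕ) : ℕ :=
  ∑ F ∈ mergedFlows N t, numDistributions d fun i => F i (Fin.last n)

lemma one_le_mergedCount_zero (N : Fin (n + 1) → ℤ) (d : ℕ) : 1 ≤ mergedCount N 0 d := by
  refine le_of_eq_of_le ?_ (single_le_sum (fun _ _ => Nat.zero_le _) (zero_mem_mergedFlows_zero N))
  simp [numDistributions]

lemma mergedCount_self_zero (hsum : ∑ i, N i = 0) : mergedCount N n 0 = Kn n N := by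
  simp [mergedCount, numDistributions, card_mergedFlows_self hsum]

lemma sum_le_mergedCount_succ (N : Fin (n + 1) → ℤ) {v : Fin (n + 1)} (hv : v ≠ Fin.last n)
    (d : ℕ) :
    ∑ F ∈ mergedFlows N v,
      ∑ f ∈ Iic (fun i => F i (Fin.last n)) with 0 ≤ N v + ∑ i, (f i : ℤ),
        numDistributions d ((fun i => F i (Fin.last n)) - f) *
          ((N v + ∑ i, (f i : ℤ)).toNat + d).choose d ≤ mergedCount N (v + 1) d := by
  let split : (Σ _ : Fin (n + 1) → Fin (n + 1) → ℕ, Fin (n + 1) → ℕ) →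
      Fin (n + 1) → Fin (n + 1) → ℕ :=
    fun p => splitFlow v p.1 p.2 (N v + ∑ i, (p.2 i : ℤ)).toNat
  let pairs := (mergedFlows N v).sigma fun F =>
    {f ∈ Iic fun i => F i (Fin.last n) | 0 ≤ N v + ∑ i, (f i : ℤ)}
  have hpairs : ∀ p ∈ pairs, p.1 ∈ mergedFlows N v ∧ p.2 ≤ (fun i => p.1 i (Fin.last n)) ∧
      0 ≤ N v + ∑ i, (p.2 i : ℤ) := fun p hp => by
    simpa [pairs] using hp
  have hinj : Set.InjOn split pairs := fun p hp q hq h => by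
    obtain ⟨hp, hpf, -⟩ := hpairs p hp
    obtain ⟨hq, hqf, -⟩ := hpairs q hq
    obtain ⟨hF, hf⟩ := eq_and_eq_of_splitFlow_eq hv hp hq hpf hqf h
    exact Sigma.ext hF (heq_of_eq hf)
  have hsubset : pairs.image split ⊆ mergedFlows N (v + 1) := image_subset_iff.mpr fun p hp => by
    obtain ⟨hF, hf, hy⟩ := hpairs p hp
    exact splitFlow_mem_mergedFlows hv hF hf (Int.toNat_of_nonneg hy)
  rw [sum_sigma']
  calc _ = ∑ p ∈ pairs, numDistributions d fun i => split p i (Fin.last n) :=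
        sum_congr rfl fun p hp => (numDistributions_splitFlow d hv (hpairs p hp).1).symm
    _ = ∑ F ∈ pairs.image split, numDistributions d fun i => F i (Fin.last n) :=
        (sum_image (f := fun F => numDistributions d fun i => F i (Fin.last n)) hinj).symm
    _ ≤ mergedCount N (v + 1) d := sum_le_sum_of_subset hsubset

lemma succ_mul_cAvg_succ (N : Fin (n + 1) → ℤ) {v : Fin (n + 1)} {d : ℕ} (hvd : v + (d + 1) = n) :
    (d + 1) * cAvg n N (d + 1) = N v + (headSum N v : ℝ) / (d + 2) := by
  have hn : n - (d + 1) = v := by omega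
  simp only [cAvg, hn, sPartial_eq_headSum, headSum_succ, ← Fin.ext_iff, sum_ite_eq', mem_univ,
    if_true]
  push_cast
  field_simp
  ring

lemma cAvg_nonneg (N : Fin (n + 1) → ℤ) (hs : ∀ k : Fin n,
      -((n : ℤ) - (k : ℕ)) * N k.castSucc ≤ sPartial n N k) {k : ℕ} (hk : k ∈ Icc 1 n) :
    0 ≤ cAvg n N k := by
  obtain ⟨hk1, hkn⟩ := mem_Icc.mp hk
  obtain ⟨d, rfl⟩ := Nat.exists_eq_add_of_le' hk1
  let v : Fin n := ⟨n - (d + 1), by omega⟩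
  have hvd : (v.castSucc : ℕ) + (d + 1) = n := Nat.sub_add_cancel hkn
  have hnv : (n : ℤ) - (v : ℕ) = d + 1 := by
    rw [Fin.val_castSucc] at hvd
    omega
  have hsv : (-((d : ℝ) + 1)) * N v.castSucc ≤ headSum N (v.castSucc : ℕ) + N v.castSucc := by
    have h := hs v
    rw [hnv, sPartial_eq_headSum, ← Fin.val_castSucc, headSum_succ] at h
    exact_mod_cast h
  have hmul : 0 ≤ ((d : ℝ) + 1) * cAvg n N (d + 1) := by
    have hcommon : (N v.castSucc : ℝ) + (headSum N (v.castSucc : ℕ) : ℝ) / (d + 2) =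
        ((d + 2) * N v.castSucc + headSum N (v.castSucc : ℕ)) / (d + 2) := by field_simp
    rw [succ_mul_cAvg_succ N hvd, hcommon]
    exact div_nonneg (by linarith) (by positivity)
  exact (mul_nonneg_iff_of_pos_left (by positivity)).mp hmul

lemma vertexFactor_mul_mergedCount_le {v : Fin (n + 1)} {d : ℕ} (hvd : v + (d + 1) = n)
    (hc : 0 ≤ cAvg n N (d + 1)) :
    vertexFactor (d + 1) (cAvg n N (d + 1)) * mergedCount N v (d + 1) ≤
      mergedCount N (v + 1) d := by
  have hv : v ≠ Fin.last n := by
    rintro rfl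
    simp at hvd
  have hmean : ∀ F ∈ mergedFlows N v, (d + 1) * cAvg n N (d + 1) =
      N v + (∑ i, (F i (Fin.last n) : ℝ)) / (d + 2) := fun F hF => by
    rw [succ_mul_cAvg_succ N hvd, ← sum_sink_of_mem_mergedFlows (by omega) hF]
    push_cast
    rfl
  rw [mergedCount, Nat.cast_sum, mul_sum]
  refine (sum_le_sum fun F hF =>
    vertexFactor_mul_numDistributions_le d _ hc (hmean F hF)).trans ?_
  exact_mod_cast sum_le_mergedCount_succ N hv d

lemma prod_vertexFactor_le_mergedCount (hc : ∀ k ∈ Icc 1 n, 0 ≤ cAvg n N k) {t d : ℕ}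
    (htd : t + d = n) :
    ∏ k ∈ Ioc d n, vertexFactor k (cAvg n N k) ≤ mergedCount N t d := by
  induction t generalizing d with
  | zero =>
    rw [Ioc_eq_empty (by omega), prod_empty]
    exact_mod_cast one_le_mergedCount_zero N d
  | succ t ih =>
    have hcd : 0 ≤ cAvg n N (d + 1) := hc _ (mem_Icc.mpr (by omega))
    let v : Fin (n + 1) := ⟨t, by omega⟩
    rw [← insert_Ioc_add_one_left_eq_Ioc (show d < n by omega), prod_insert (by simp)]
    calc vertexFactor (d + 1) (cAvg n N (d + 1)) * ∏ k ∈ Ioc (d + 1) n, vertexFactor k (cAvg n N k)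
        ≤ vertexFactor (d + 1) (cAvg n N (d + 1)) * mergedCount N v (d + 1) :=
          mul_le_mul_of_nonneg_left (ih (by omega)) (vertexFactor_nonneg hcd _)
      _ ≤ mergedCount N (t + 1) d :=
          vertexFactor_mul_mergedCount_le (v := v) (show t + (d + 1) = n by omega) hcd

end Flows

lemma prod_vertexFactor_eq (n : ℕ) (c : ℕ → ℝ) :
    ∏ k ∈ Icc 1 n, vertexFactor k (c k) =
      1 / (Real.exp n * √n.factorial) *
        ∏ k ∈ Icc 1 n, ((c k + 1) ^ (c k + 1) / c k ^ c k) ^ (k - 1) := by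
  have hsqrt : ∏ k ∈ Icc 1 n, √(k : ℝ) = √n.factorial := by
    rw [← prod_Ico_id_eq_factorial, Ico_add_one_right_eq_Icc, Nat.cast_prod,
      Real.sqrt_prod _ fun k _ => Nat.cast_nonneg k]
  simp only [vertexFactor]
  rw [prod_div_distrib, prod_mul_distrib, hsqrt, prod_const, Nat.card_Icc, Nat.add_sub_cancel,
    Real.exp_one_pow]
  ring

lemma exp_mul_sqrt_factorial_le {n : ℕ} (hn : 1 ≤ n) :
    Real.exp n * √n.factorial ≤ (n : ℝ) ^ 2 * Real.exp n * (n.factorial : ℝ) ^ 2 := by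
  have hn : (1 : ℝ) ≤ (n : ℝ) ^ 2 := one_le_pow₀ (by exact_mod_cast hn)
  have hfact : (1 : ℝ) ≤ n.factorial := by exact_mod_cast n.factorial_pos
  have hsqrt : √n.factorial ≤ (n.factorial : ℝ) ^ 2 :=
    Real.sqrt_le_iff.mpr ⟨by positivity, by
      rw [← pow_mul]
      exact le_self_pow₀ hfact (by norm_num)⟩
  calc Real.exp n * √n.factorial ≤ Real.exp n * (n.factorial : ℝ) ^ 2 := by gcongr
    _ ≤ (n : ℝ) ^ 2 * (Real.exp n * (n.factorial : ℝ) ^ 2) :=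
        le_mul_of_one_le_left (by positivity) hn
    _ = (n : ℝ) ^ 2 * Real.exp n * (n.factorial : ℝ) ^ 2 := by ring

theorem kostant_general_lower_bound_two_general (n : ℕ) (N : Fin (n + 1) → ℤ)
    (hsum : ∑ i, N i = 0) (hc : ∀ k ∈ Icc 1 n, 0 ≤ cAvg n N k) :
    1 / (Real.exp n * √n.factorial) *
      ∏ k ∈ Icc 1 n,
        ((cAvg n N k + 1) ^ (cAvg n N k + 1) / cAvg n N k ^ cAvg n N k) ^ (k - 1) ≤ Kn n N := by
  rw [← prod_vertexFactor_eq, ← mergedCount_self_zero hsum, ← zero_add 1, Icc_add_one_left_eq_Ioc]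
  exact prod_vertexFactor_le_mergedCount hc (add_zero n)

/-- **Theorem (general lower bound, part 2).** If `s_k ≥ max{0, −(n−k)·N_k}` and
`N_k ≥ 1/(n−k) − (n−k+1)` for all `0 ≤ k ≤ n−1`, then
`K_n(N) ≥ (1/(n² e^n (n!)²)) · ∏_{k=1}^{n} ((c_k+1)^{c_k+1}/c_k^{c_k})^{k−1}`
(real powers, with the convention `0^0 = 1`). -/
theorem kostant_general_lower_bound_two (n : ℕ) (hn : 1 ≤ n) (N : Fin (n + 1) → ℤ)
    (hsum : ∑ i, N i = 0)
    (hs : ∀ k : Fin n,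
      max 0 (-((n : ℤ) - (k : ℕ)) * N k.castSucc) ≤ sPartial n N k)
    (hN : ∀ k : Fin n,
      1 / ((n : ℝ) - (k : ℕ)) - ((n : ℝ) - (k : ℕ) + 1) ≤ (N k.castSucc : ℝ)) :
    (1 / ((n : ℝ) ^ 2 * Real.exp n * (Nat.factorial n : ℝ) ^ 2)) *
      (∏ k ∈ Finset.Icc 1 n,
        ((cAvg n N k + 1) ^ (cAvg n N k + 1) / cAvg n N k ^ cAvg n N k) ^ (k - 1)) ≤
      (Kn n N : ℝ) := by
  have hc : ∀ k ∈ Icc 1 n, 0 ≤ cAvg n N k := fun _ =>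
    cAvg_nonneg N fun v => (le_max_right _ _).trans (hs v)
  have hconst := one_div_le_one_div_of_le (by positivity) (exp_mul_sqrt_factorial_le hn)
  refine (mul_le_mul_of_nonneg_right hconst (prod_nonneg fun k hk => ?_)).trans
    (kostant_general_lower_bound_two_general n N hsum hc)
  have := hc k hk
  positivity
end

section
/- There exists a constant C > 0 such that for all integers t ≥ 1 and n ≥ 1, log₂ K_n(t, 0, …, 0, −t) ≥ (n/2)·(log₂ t)² − C·n·(1 + log₂ t) − C·(1 + log₂ t)³, where log₂ denotes the base-2 logarithm. -/
open Finset

/-!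
The netflow conditions at the vertices amount to conditions on cuts: `f` has netflow `N` if and only
if, for every `c`, the edges `(i, j)` with `i ≤ c < j` carry `N_0 + ⋯ + N_c` in total. The path edge
`(c, c + 1)` crosses this cut and no other, so any choice of flows on the edges of length at least
two that overloads no cut extends (uniquely) along the path to an integer flow with netflow `N`.

Suppose that every cut must carry at least `t`, as for `N = (t, 0, …, 0, -t)`. At most `(k + 1)²`
edges of length at most `k + 1` cross a given cut, so the at least `(n - k) k` edges of length
between `2` and `k + 1` can independently carry any flow up to `q = ⌊t / (k + 1)²⌋`, whence `K_n ≥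
(q + 1) ^ ((n - k) k)`. With `k = ⌊log₂ t⌋` the exponent is about `n log₂ t`, and `log₂ (q + 1)` is
at least `(log₂ t) / 2 - O(1)`.
-/

theorem sum_Iic_injective {α M : Type*} [PartialOrder α] [LocallyFiniteOrderBot α]
    [AddCancelCommMonoid M] :
    Function.Injective fun (f : α → M) (c : α) => ∑ i ∈ Iic c, f i := by
  have : WellFoundedLT α :=
    StrictMono.wellFoundedLT (f := (Iic : α → Finset α)) fun _ _ => Iic_ssubset_Iic.mpr
  intro f g h
  funext c
  induction c using WellFoundedLT.induction with
  | ind c ih =>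
    have hc : ∑ i ∈ Iic c, f i = ∑ i ∈ Iic c, g i := congrFun h c
    have hlt : ∑ i ∈ Iio c, f i = ∑ i ∈ Iio c, g i :=
      sum_congr rfl fun i hi => ih i (mem_Iio.mp hi)
    rw [← add_sum_Iio_eq_sum_Iic, ← add_sum_Iio_eq_sum_Iic, hlt] at hc
    exact add_right_cancel hc

section CutFlow

variable {α M : Type*} [LinearOrder α] [LocallyFiniteOrderBot α] [LocallyFiniteOrderTop α]
  [AddCommMonoid M]

/-- The total flow of `f` across the cut after `c`, that is, along the edges `(i, j)` with
`i ≤ c < j`. -/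
def cutFlow (f : α → α → M) (c : α) : M := ∑ i ∈ Iic c, ∑ j ∈ Ioi c, f i j

theorem cutFlow_add (f g : α → α → M) (c : α) :
    cutFlow (f + g) c = cutFlow f c + cutFlow g c := by
  simp only [cutFlow, Pi.add_apply, sum_add_distrib]

theorem cutFlow_mono [PartialOrder M] [IsOrderedAddMonoid M] {f g : α → α → M} (h : f ≤ g)
    (c : α) : cutFlow f c ≤ cutFlow g c :=
  sum_le_sum fun i _ => sum_le_sum fun j _ => h i j

theorem le_cutFlow [PartialOrder M] [CanonicallyOrderedAdd M]
    (f : α → α → M) {i j : α} (hij : i < j) : f i j ≤ cutFlow f i :=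
  calc f i j ≤ ∑ j ∈ Ioi i, f i j := single_le_sum_of_canonicallyOrdered (mem_Ioi.mpr hij)
    _ ≤ cutFlow f i := single_le_sum_of_canonicallyOrdered
        (f := fun a => ∑ j ∈ Ioi i, f a j) (mem_Iic.mpr le_rfl)

theorem sum_Iic_outflow_eq_cutFlow_add_sum_Iic_inflow (f : α → α → M) (c : α) :
    ∑ i ∈ Iic c, ∑ j ∈ Ioi i, f i j = cutFlow f c + ∑ i ∈ Iic c, ∑ k ∈ Iio i, f k i := by
  have inflow : ∑ i ∈ Iic c, ∑ k ∈ Iio i, f k i =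
      ∑ i ∈ Iic c, ∑ j ∈ Ioi i with j ≤ c, f i j :=
    sum_comm' fun i k => by
      simp only [mem_Iic, mem_Iio, mem_filter, mem_Ioi]
      exact ⟨fun h => ⟨⟨h.2, h.1⟩, h.2.le.trans h.1⟩, fun h => ⟨h.1.2, h.1.1⟩⟩
  rw [inflow, cutFlow, ← sum_add_distrib]
  refine sum_congr rfl fun i hi => ?_
  have crossing : {j ∈ Ioi i | ¬ j ≤ c} = Ioi c := by
    ext j
    simp only [mem_filter, mem_Ioi, not_le, and_iff_right_iff_imp]
    exact (mem_Iic.mp hi).trans_lt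
  rw [← sum_filter_not_add_sum_filter _ (· ≤ c), crossing]

end CutFlow

section IntFlow

variable {n : ℕ} {N : Fin (n + 1) → ℤ}

theorem sPartial_eq_sum_Iic (N : Fin (n + 1) → ℤ) (c : Fin (n + 1)) :
    sPartial n N c = ∑ i ∈ Iic c, N i := by
  simp only [sPartial, Fin.val_fin_le, ← sum_filter, filter_ge_eq_Iic]

theorem sPartial_self (N : Fin (n + 1) → ℤ) : sPartial n N n = ∑ i, N i :=
  sum_congr rfl fun i _ => if_pos i.is_le

theorem isIntFlow_iff_cutFlow_eq_sPartial {f : Fin (n + 1) → Fin (n + 1) → ℕ} :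
    IsIntFlow n N f ↔
      (∀ i j, ¬ i < j → f i j = 0) ∧
        ∀ c : Fin (n + 1), ((cutFlow f c : ℕ) : ℤ) = sPartial n N c := by
  have partialSum (c : Fin (n + 1)) :
      ∑ i ∈ Iic c, ((∑ j, if i < j then (f i j : ℤ) else 0) -
        ∑ k, if k < i then (f k i : ℤ) else 0) = cutFlow f c := by
    simp only [← sum_filter, filter_lt_eq_Ioi, filter_gt_eq_Iio, sum_sub_distrib]
    rw [sub_eq_iff_eq_add]
    exact_mod_cast sum_Iic_outflow_eq_cutFlow_add_sum_Iic_inflow f c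
  refine and_congr_right fun _ => ?_
  rw [← funext_iff, ← sum_Iic_injective.eq_iff, funext_iff]
  simp only [partialSum, sPartial_eq_sum_Iic]

theorem IsIntFlow.le_toNat_sPartial {f : Fin (n + 1) → Fin (n + 1) → ℕ} (hf : IsIntFlow n N f)
    (i j : Fin (n + 1)) : f i j ≤ (sPartial n N i).toNat := by
  obtain ⟨hzero, hcut⟩ := isIntFlow_iff_cutFlow_eq_sPartial.mp hf
  by_cases hij : i < j
  · rw [← hcut i, Int.toNat_natCast]
    exact le_cutFlow f hij
  · simp [hzero i j hij]

instance finite_isIntFlow_s10 : Finite {f : Fin (n + 1) → Fin (n + 1) → ℕ // IsIntFlow n N f} :=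
  ((Set.finite_Iic (fun i _ => (sPartial n N i).toNat : Fin (n + 1) → Fin (n + 1) → ℕ)).subset
    fun _ hf => IsIntFlow.le_toNat_sPartial hf).to_subtype

/-- The flow carrying `g i` along each edge `(i, i + 1)` and nothing elsewhere. -/
def pathFlow (g : Fin (n + 1) → ℕ) (i j : Fin (n + 1)) : ℕ := if (j : ℕ) = i + 1 then g i else 0

theorem cutFlow_pathFlow (g : Fin (n + 1) → ℕ) {c : Fin (n + 1)} (hc : (c : ℕ) < n) :
    cutFlow (pathFlow g) c = g c := by
  rw [cutFlow, sum_eq_single c, sum_eq_single ⟨c + 1, by omega⟩]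
  · simp [pathFlow]
  · intro j _ hj
    exact if_neg fun h => hj (Fin.ext h)
  · simp [Fin.lt_def]
  · intro i hi hic
    refine sum_eq_zero fun j hj => if_neg ?_
    rw [mem_Iic, Fin.le_def] at hi
    rw [mem_Ioi, Fin.lt_def] at hj
    have := Fin.val_ne_of_ne hic
    omega
  · simp

/-- The flow obtained from `F` by adding, on each path edge `(c, c + 1)`, what is missing for the
cut after `c` to carry `sPartial n N c`. The missing amount is a truncated difference, so this is
an integer flow with netflow `N` only when `F` overloads no cut. -/
def pathCompletion (N : Fin (n + 1) → ℤ) (F : Fin (n + 1) → Fin (n + 1) → ℕ) :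
    Fin (n + 1) → Fin (n + 1) → ℕ :=
  F + pathFlow fun c => (sPartial n N c).toNat - cutFlow F c

theorem isIntFlow_pathCompletion {F : Fin (n + 1) → Fin (n + 1) → ℕ} (hN : ∑ i, N i = 0)
    (hF : ∀ i j, ¬ i < j → F i j = 0)
    (hcut : ∀ c : Fin (n + 1), ((cutFlow F c : ℕ) : ℤ) ≤ sPartial n N c) :
    IsIntFlow n N (pathCompletion N F) := by
  refine isIntFlow_iff_cutFlow_eq_sPartial.mpr ⟨fun i j hij => ?_, fun c => ?_⟩
  · have : (j : ℕ) ≠ i + 1 := by rw [Fin.lt_def] at hij; omega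
    simp [pathCompletion, pathFlow, hF i j hij, this]
  · rcases c.is_le.lt_or_eq with hc | hc
    · rw [pathCompletion, cutFlow_add, cutFlow_pathFlow _ hc]
      have := hcut c
      omega
    · obtain rfl : c = Fin.last n := Fin.ext hc
      simp [cutFlow, sPartial_self, hN, ← Fin.top_eq_last]

theorem injOn_pathCompletion (N : Fin (n + 1) → ℤ) :
    Set.InjOn (pathCompletion N) {F | ∀ i j : Fin (n + 1), ¬ (i : ℕ) + 1 < j → F i j = 0} := by
  intro F hF G hG h
  funext i j
  by_cases hij : (i : ℕ) + 1 < j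
  · have := congrFun₂ h i j
    simpa [pathCompletion, pathFlow, hij.ne'] using this
  · rw [hF i j hij, hG i j hij]

theorem prod_add_one_le_Kn {u : Fin (n + 1) → Fin (n + 1) → ℕ} (hN : ∑ i, N i = 0)
    (hu : ∀ i j : Fin (n + 1), ¬ (i : ℕ) + 1 < j → u i j = 0)
    (hcut : ∀ c : Fin (n + 1), ((cutFlow u c : ℕ) : ℤ) ≤ sPartial n N c) :
    ∏ i, ∏ j, (u i j + 1) ≤ Kn n N := by
  have long {F} (hF : F ∈ Iic u) (i j : Fin (n + 1)) (hij : ¬ (i : ℕ) + 1 < j) : F i j = 0 :=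
    Nat.le_zero.mp ((mem_Iic.mp hF i j).trans_eq (hu i j hij))
  have flow (F : Iic u) : IsIntFlow n N (pathCompletion N F) := by
    refine isIntFlow_pathCompletion hN (fun i j hij => long F.2 i j ?_) fun c => ?_
    · rw [Fin.lt_def] at hij
      omega
    · exact (Nat.cast_le.mpr (cutFlow_mono (mem_Iic.mp F.2) c)).trans (hcut c)
  have inj : Function.Injective fun F : Iic u =>
      (⟨pathCompletion N F, flow F⟩ : {f // IsIntFlow n N f}) := fun F G h =>
    Subtype.ext (injOn_pathCompletion N (long F.2) (long G.2) (congrArg Subtype.val h))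
  calc ∏ i, ∏ j, (u i j + 1) = Nat.card (Iic u) := by
        simp only [Nat.card_eq_fintype_card, Fintype.card_coe, Pi.card_Iic, Nat.card_Iic]
    _ ≤ Kn n N := Nat.card_le_card_of_injective _ inj

theorem succ_pow_card_le_Kn {q : ℕ} {E : Finset (Fin (n + 1) × Fin (n + 1))}
    (hN : ∑ i, N i = 0) (hE : ∀ e ∈ E, (e.1 : ℕ) + 1 < e.2)
    (hcut : ∀ c : Fin (n + 1), ((q * #{e ∈ E | e.1 ≤ c ∧ c < e.2} : ℕ) : ℤ) ≤ sPartial n N c) :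
    (q + 1) ^ #E ≤ Kn n N := by
  let u (i j : Fin (n + 1)) : ℕ := if (i, j) ∈ E then q else 0
  have hu (i j : Fin (n + 1)) (hij : ¬ (i : ℕ) + 1 < j) : u i j = 0 :=
    if_neg fun h => hij (hE _ h)
  have cutFlow_u (c : Fin (n + 1)) : cutFlow u c = q * #{e ∈ E | e.1 ≤ c ∧ c < e.2} := by
    have crossing : {e ∈ Iic c ×ˢ Ioi c | e ∈ E} = {e ∈ E | e.1 ≤ c ∧ c < e.2} := by
      ext e
      simp only [mem_filter, mem_product, mem_Iic, mem_Ioi, and_comm]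
    rw [cutFlow, ← sum_product', ← sum_filter, crossing, sum_const, smul_eq_mul, mul_comm]
  calc (q + 1) ^ #E = ∏ e : Fin (n + 1) × Fin (n + 1), if e ∈ E then q + 1 else 1 := by
        simp only [prod_ite_mem, univ_inter, prod_const]
    _ = ∏ i, ∏ j, (u i j + 1) := by
        simp only [u, Fintype.prod_prod_type, ite_add, zero_add]
    _ ≤ Kn n N := prod_add_one_le_Kn hN hu fun c => by rw [cutFlow_u]; exact hcut c

end IntFlow

section Band

variable {n : ℕ}

/-- The edges `(i, j)` of length `j - i` between `2` and `k + 1`. -/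
def bandEdges (n k : ℕ) : Finset (Fin (n + 1) × Fin (n + 1)) :=
  {e | (e.1 : ℕ) + 1 < e.2 ∧ (e.2 : ℕ) ≤ e.1 + 1 + k}

theorem mul_le_card_bandEdges (n k : ℕ) : (n - k) * k ≤ #(bandEdges n k) := by
  have surj : Set.SurjOn (fun e : Fin (n + 1) × Fin (n + 1) => ((e.1 : ℕ), (e.2 - e.1 - 2 : ℕ)))
      (bandEdges n k) (range (n - k) ×ˢ range k : Finset (ℕ × ℕ)) := by
    rintro ⟨a, d⟩ had
    simp only [coe_product, coe_range, Set.mem_prod, Set.mem_Iio] at had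
    refine ⟨(⟨a, by omega⟩, ⟨a + 2 + d, by omega⟩), ?_, ?_⟩
    · simp only [bandEdges, coe_filter, mem_univ, true_and, Set.mem_ofPred_eq]
      omega
    · simp only [Prod.mk.injEq, true_and]
      omega
  simpa using card_le_card_of_surjOn _ surj

theorem card_bandEdges_crossing_le (k : ℕ) (c : Fin (n + 1)) :
    #{e ∈ bandEdges n k | e.1 ≤ c ∧ c < e.2} ≤ (k + 1) ^ 2 :=
  calc #{e ∈ bandEdges n k | e.1 ≤ c ∧ c < e.2}
      ≤ #(Icc (c - k : ℕ) c ×ˢ Icc (c + 1 : ℕ) (c + 1 + k)) := by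
        refine card_le_card_of_injOn (Prod.map Fin.val Fin.val) (fun e he => ?_)
          (Fin.val_injective.prodMap Fin.val_injective).injOn
        simp only [bandEdges, coe_filter, mem_filter, mem_univ, true_and, Set.mem_ofPred_eq,
          Fin.le_def, Fin.lt_def, coe_product, coe_Icc, Set.mem_prod, Prod.map_fst, Prod.map_snd,
          Set.mem_Icc] at he ⊢
        omega
    _ = (c + 1 - (c - k)) * (k + 1) := by
        rw [card_product, Nat.card_Icc, Nat.card_Icc]
        congr 1
        omega
    _ ≤ (k + 1) ^ 2 := by
        rw [sq]
        gcongr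
        omega

theorem succ_pow_le_Kn {N : Fin (n + 1) → ℤ} {k q : ℕ} (hN : ∑ i, N i = 0)
    (hs : ∀ c < n, ((q * (k + 1) ^ 2 : ℕ) : ℤ) ≤ sPartial n N c) :
    (q + 1) ^ ((n - k) * k) ≤ Kn n N := by
  refine (Nat.pow_le_pow_right q.succ_pos (mul_le_card_bandEdges n k)).trans ?_
  refine succ_pow_card_le_Kn hN (fun e he => (mem_filter.mp he).2.1) fun c => ?_
  rcases c.is_le.lt_or_eq with hc | hc
  · refine le_trans ?_ (hs c hc)
    exact_mod_cast Nat.mul_le_mul_left q (card_bandEdges_crossing_le k c)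
  · obtain rfl : c = Fin.last n := Fin.ext hc
    simp [sPartial_self, hN, (Fin.le_last _).not_gt]

end Band

theorem logb_two_le_div_four_add_three {x : ℝ} (hx : 0 < x) : Real.logb 2 x ≤ x / 4 + 3 := by
  have hlog : Real.log (x / 8) ≤ x / 8 := Real.log_le_self (by positivity)
  have hlog_eq : Real.log (x / 8) = Real.log x - 3 * Real.log 2 := by
    rw [Real.log_div hx.ne' (by norm_num), show (8 : ℝ) = 2 ^ 3 by norm_num, Real.log_pow]
    norm_cast
  have hlog_two := Real.log_two_gt_d9
  have hhalf : x * (1 / 2) ≤ x * Real.log 2 := mul_le_mul_of_nonneg_left (by linarith) hx.le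
  rw [Real.logb, div_le_iff₀ (by positivity)]
  linarith

-- Bounding `logb 2 (k + 1)` with slope `1 / 4` makes the loss from dividing by `(k + 1) ^ 2` at
-- most half of `logb 2 t`, up to a constant.
theorem half_logb_two_sub_le_logb_two_floor_add_one {t : ℝ} (ht : 1 ≤ t) :
    Real.logb 2 t / 2 - 13 / 2 ≤
      Real.logb 2 (⌊t / (⌊Real.logb 2 t⌋₊ + 1) ^ 2⌋₊ + 1) := by
  set L := Real.logb 2 t
  have hL : 0 ≤ L := Real.logb_nonneg one_lt_two ht
  have hfloor : Real.logb 2 (⌊L⌋₊ + 1) ≤ (L + 1) / 4 + 3 :=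
    (logb_two_le_div_four_add_three (by positivity)).trans (by gcongr; exact Nat.floor_le hL)
  calc L / 2 - 13 / 2 ≤ L - 2 * Real.logb 2 (⌊L⌋₊ + 1) := by linarith
    _ = Real.logb 2 (t / (⌊L⌋₊ + 1) ^ 2) := by
        rw [Real.logb_div (by positivity) (by positivity), Real.logb_pow, Nat.cast_ofNat]
    _ ≤ Real.logb 2 (⌊t / (⌊L⌋₊ + 1) ^ 2⌋₊ + 1) :=
        Real.logb_le_logb_of_le one_lt_two (by positivity) (Nat.lt_floor_add_one _).le

theorem mul_sub_one_sub_sq_le_sub_floor_mul_floor (n : ℕ) {x : ℝ} (hx : 0 ≤ x) :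
    n * (x - 1) - x ^ 2 ≤ ((n - ⌊x⌋₊ : ℕ) : ℝ) * ⌊x⌋₊ :=
  calc n * (x - 1) - x ^ 2 ≤ n * ⌊x⌋₊ - (⌊x⌋₊ : ℝ) ^ 2 := by
        gcongr
        · exact (Nat.sub_one_lt_floor x).le
        · exact Nat.floor_le hx
    _ = ((n : ℝ) - ⌊x⌋₊) * ⌊x⌋₊ := by ring
    _ ≤ ((n - ⌊x⌋₊ : ℕ) : ℝ) * ⌊x⌋₊ := by
        gcongr
        rw [sub_le_iff_le_add]
        exact_mod_cast le_tsub_add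

theorem sub_floor_mul_floor_le_mul (n : ℕ) {x : ℝ} (hx : 0 ≤ x) :
    ((n - ⌊x⌋₊ : ℕ) : ℝ) * ⌊x⌋₊ ≤ n * x := by
  gcongr
  · exact n.sub_le _
  · exact Nat.floor_le hx

theorem kostant_CRY_lower_bound_general {n : ℕ} {N : Fin (n + 1) → ℤ} {t : ℝ} (ht : 1 ≤ t)
    (hN : ∑ i, N i = 0) (hs : ∀ c < n, t ≤ sPartial n N c) :
    (n : ℝ) / 2 * Real.logb 2 t ^ 2 - 7 * n * Real.logb 2 t - Real.logb 2 t ^ 3 / 2 ≤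
      Real.logb 2 (Kn n N) := by
  set L := Real.logb 2 t
  set k := ⌊L⌋₊
  set q := ⌊t / (k + 1) ^ 2⌋₊
  have hL : 0 ≤ L := Real.logb_nonneg one_lt_two ht
  have hq : (q : ℝ) * (k + 1) ^ 2 ≤ t :=
    (le_div_iff₀ (by positivity)).mp (Nat.floor_le (by positivity))
  have hKn : (q + 1) ^ ((n - k) * k) ≤ Kn n N :=
    succ_pow_le_Kn hN fun c hc => by exact_mod_cast hq.trans (hs c hc)
  calc (n : ℝ) / 2 * L ^ 2 - 7 * n * L - L ^ 3 / 2
      = (n * (L - 1) - L ^ 2) * (L / 2) - n * L * (13 / 2) := by ring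
    _ ≤ ((n - k : ℕ) : ℝ) * k * (L / 2) - ((n - k : ℕ) : ℝ) * k * (13 / 2) :=
        sub_le_sub
          (mul_le_mul_of_nonneg_right (mul_sub_one_sub_sq_le_sub_floor_mul_floor n hL)
            (by positivity))
          (mul_le_mul_of_nonneg_right (sub_floor_mul_floor_le_mul n hL) (by norm_num))
    _ = ((n - k : ℕ) : ℝ) * k * (L / 2 - 13 / 2) := by ring
    _ ≤ ((n - k : ℕ) : ℝ) * k * Real.logb 2 (q + 1) := by
        gcongr
        exact half_logb_two_sub_le_logb_two_floor_add_one ht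
    _ = Real.logb 2 ((q + 1) ^ ((n - k) * k)) := by rw [Real.logb_pow, Nat.cast_mul]
    _ ≤ Real.logb 2 (Kn n N) :=
        Real.logb_le_logb_of_le one_lt_two (by positivity) (by exact_mod_cast hKn)

/-- The netflow `(t, 0, …, 0, -t)` of the Chan–Robbins–Yuen polytope. -/
def cryNetflow (n : ℕ) (t : ℤ) (i : Fin (n + 1)) : ℤ :=
  if (i : ℕ) = 0 then t else if (i : ℕ) = n then -t else 0

theorem sPartial_cryNetflow {n c : ℕ} (t : ℤ) (hc : c < n) :
    sPartial n (cryNetflow n t) c = t := by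
  rw [sPartial, sum_eq_single 0]
  · simp [cryNetflow]
  · intro i _ hi
    have hi0 : (i : ℕ) ≠ 0 := fun h => hi (Fin.ext h)
    rw [cryNetflow, if_neg hi0]
    exact ite_eq_right_iff.mpr fun hic => if_neg (hic.trans_lt hc).ne
  · simp

theorem sum_cryNetflow {n : ℕ} (t : ℤ) (hn : 1 ≤ n) : ∑ i, cryNetflow n t i = 0 := by
  obtain ⟨m, rfl⟩ := Nat.exists_eq_add_of_le' hn
  simp [cryNetflow, Fin.sum_univ_succ (n := m + 1), Fin.sum_univ_castSucc, Fin.is_lt _ |>.ne]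

/-- **Theorem (CRY case `N = (t,0,…,0,−t)`).** There is a constant `C > 0` such
that for all integers `t ≥ 1` and `n ≥ 1`,
`log₂ K_n(t,0,…,0,−t) ≥ (n/2)·(log₂ t)² − C·n·(1 + log₂ t) − C·(1 + log₂ t)³`. -/
theorem kostant_CRY_lower_bound :
    ∃ C : ℝ, 0 < C ∧ ∀ t n : ℕ, 1 ≤ t → 1 ≤ n →
      ((n : ℝ) / 2) * Real.logb 2 t ^ 2 - C * n * (1 + Real.logb 2 t) -
          C * (1 + Real.logb 2 t) ^ 3 ≤
        Real.logb 2
          (Kn n fun i =>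
            if (i : ℕ) = 0 then (t : ℤ) else if (i : ℕ) = n then -(t : ℤ) else 0) := by
  refine ⟨7, by norm_num, fun t n ht hn => ?_⟩
  have ht' : (1 : ℝ) ≤ t := by exact_mod_cast ht
  have hL : 0 ≤ Real.logb 2 t := Real.logb_nonneg one_lt_two ht'
  have hKn := kostant_CRY_lower_bound_general ht' (sum_cryNetflow t hn) fun c hc => by
    rw [sPartial_cryNetflow _ hc, Int.cast_natCast]
  have hcube : Real.logb 2 t ^ 3 ≤ (1 + Real.logb 2 t) ^ 3 := by gcongr; linarith
  have hcube_nonneg : 0 ≤ Real.logb 2 t ^ 3 := by positivity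
  refine le_trans ?_ hKn
  linarith
end
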